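/- Let l ≥ 1 and let z_1, …, z_l be integers with z_1 ≥ 0 and z_j ≥ 1 for all 2 ≤ j ≤ l. Then the sequence of denominators (in lowest terms) of cf(z_1, …, z_l, j) is strictly increasing in j for j ≥ 1, and the sequence of values j ↦ cf(z_1, …, z_l, j) is strictly monotone: it is either strictly increasing for all j ≥ 1 or strictly decreasing for all j ≥ 1. -/

import Mathlib

/-- The continued fraction value of a nonempty list of integers:
`cf [z₁, …, z_k] = z₁ + 1/(z₂ + 1/(⋯ + 1/z_k))`, using the convention `1/0 = 0` in `ℚ`. -/
def cf (l : List ℤ) : ℚ := l.foldr (fun z r => (z : ℚ) + 1 / r) 0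

theorem cf_step (z : ℤ) (x : ℚ) (hx : 0 < x) :
    ((z : ℚ) + 1 / x).num = z * x.num + x.den ∧ ((((z : ℚ) + 1 / x).den : ℕ) : ℤ) = x.num := by
  have hn : 0 < x.num := Rat.num_pos.mpr hx
  have hnq : (x.num : ℚ) ≠ 0 := by exact_mod_cast hn.ne'
  have hdq : (x.den : ℚ) ≠ 0 := by exact_mod_cast x.den_nz
  have e : (z : ℚ) + 1 / x = ((z * x.num + x.den : ℤ) : ℚ) / (x.num : ℤ) := by
    conv_lhs => rw [← Rat.num_div_den x]
    push_cast
    field_simp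
  have hc : Nat.Coprime (z * x.num + x.den).natAbs x.num.natAbs := by
    rw [← Int.isCoprime_iff_nat_coprime]
    have h : IsCoprime (x.den : ℤ) x.num := by
      rw [Int.isCoprime_iff_nat_coprime]
      simpa using x.reduced.symm
    have := h.add_mul_right_left z
    rwa [add_comm] at this
  rw [e]
  exact ⟨Rat.num_div_eq_of_coprime hn hc, Rat.den_div_eq_of_coprime hn hc⟩

theorem cf_cons (z : ℤ) (L : List ℤ) : cf (z :: L) = (z : ℚ) + 1 / cf L := rfl

theorem cf_aux (L : List ℤ) (hL : ∀ a ∈ L, 1 ≤ a) :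
    (∀ j : ℤ, 1 ≤ j → 0 < cf (L ++ [j]) ∧ (cf (L ++ [j])).num < (cf (L ++ [j + 1])).num ∧
      (cf (L ++ [j])).den ≤ (cf (L ++ [j + 1])).den) ∧
    ((∀ j : ℤ, 1 ≤ j → cf (L ++ [j]) < cf (L ++ [j + 1])) ∨
     (∀ j : ℤ, 1 ≤ j → cf (L ++ [j + 1]) < cf (L ++ [j]))) := by
  induction L with
  | nil =>
    have h : ∀ j : ℤ, cf ([] ++ [j]) = (j : ℚ) := by intro j; simp [cf]
    refine ⟨fun j hj => ?_, Or.inl fun j hj => ?_⟩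
    · rw [h, h, Rat.num_intCast, Rat.num_intCast, Rat.den_intCast, Rat.den_intCast]
      refine ⟨by exact_mod_cast (by omega : 0 < j), by omega, le_rfl⟩
    · rw [h, h]; exact_mod_cast (by omega : j < j + 1)
  | cons a L ih =>
    obtain ⟨h1, h2⟩ := ih (fun b hb => hL b (List.mem_cons_of_mem _ hb))
    have ha : 1 ≤ a := hL a List.mem_cons_self
    simp only [List.cons_append, cf_cons]
    refine ⟨fun j hj => ?_, ?_⟩
    · obtain ⟨p, q, r⟩ := h1 j hj
      obtain ⟨p', -, -⟩ := h1 (j + 1) (by omega)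
      obtain ⟨s, t⟩ := cf_step a _ p
      obtain ⟨s', t'⟩ := cf_step a _ p'
      refine ⟨?_, ?_, by omega⟩
      · have : (1 : ℚ) ≤ a := by exact_mod_cast ha
        positivity
      · rw [s, s']; nlinarith
    · rcases h2 with h | h
      · right
        intro j hj
        have := one_div_lt_one_div_of_lt (h1 j hj).1 (h j hj)
        linarith
      · left
        intro j hj
        have := one_div_lt_one_div_of_lt (h1 (j + 1) (by omega)).1 (h j hj)
        linarith

/-- Let `l ≥ 1` and `z₁, …, z_l` be integers with `z₁ ≥ 0` and `z_j ≥ 1` for `2 ≤ j ≤ l`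
(here `0`-indexed: `0 ≤ z 0` and `1 ≤ z j` for `1 ≤ j < l`). Then the reduced
denominators of `cf(z₁, …, z_l, j)` are strictly increasing in `j ≥ 1`, and the values
`j ↦ cf(z₁, …, z_l, j)` are strictly monotone: either strictly increasing for all `j ≥ 1`
or strictly decreasing for all `j ≥ 1`. -/
theorem cf_append_denom_and_value_monotone (l : ℕ) (z : ℕ → ℤ) (hl : 1 ≤ l)
    (h0 : 0 ≤ z 0) (hpos : ∀ j, 1 ≤ j → j < l → 1 ≤ z j) :
    (∀ j : ℤ, 1 ≤ j →
      (cf ((List.range l).map z ++ [j])).den < (cf ((List.range l).map z ++ [j + 1])).den) ∧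
    ((∀ j : ℤ, 1 ≤ j →
        cf ((List.range l).map z ++ [j]) < cf ((List.range l).map z ++ [j + 1])) ∨
     (∀ j : ℤ, 1 ≤ j →
        cf ((List.range l).map z ++ [j + 1]) < cf ((List.range l).map z ++ [j]))) := by
  obtain ⟨m, rfl⟩ : ∃ m, l = m + 1 := ⟨l - 1, by omega⟩
  rw [List.range_succ_eq_map, List.map_cons, List.map_map]
  obtain ⟨h1, h2⟩ := cf_aux ((List.range m).map (z ∘ Nat.succ)) (by
    intro a ha
    obtain ⟨i, hi, rfl⟩ := List.mem_map.mp ha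
    exact hpos _ (by omega) (by have := List.mem_range.mp hi; omega))
  simp only [List.cons_append, cf_cons]
  refine ⟨fun j hj => ?_, ?_⟩
  · obtain ⟨p, q, r⟩ := h1 j hj
    obtain ⟨p', -, -⟩ := h1 (j + 1) (by omega)
    obtain ⟨s, t⟩ := cf_step (z 0) _ p
    obtain ⟨s', t'⟩ := cf_step (z 0) _ p'
    omega
  · rcases h2 with h | h
    · right
      intro j hj
      have := one_div_lt_one_div_of_lt (h1 j hj).1 (h j hj)
      linarith
    · left
      intro j hj
      have := one_div_lt_one_div_of_lt (h1 (j + 1) (by omega)).1 (h j hj)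
      linarith
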